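/- Let f : {0,1}^n → {0,1} be 0-separating: there exists a coordinate i such that every vector a ∈ {0,1}^n with a_i = 1 satisfies f(a) = 1. Then any two solutions a, b ∈ f⁻¹(1) are connected in the solution graph G(f), and d_f(a,b) ≤ |a − b| + 2, where |a − b| is the Hamming distance. -/

import Mathlib

/-- Coordinatewise majority operation on `Bool`. -/
def maj (x y z : Bool) : Bool := (x && y) || (y && z) || (z && x)

/-- One step in the solution graph of `R`: both endpoints are solutions and
they differ in exactly one coordinate. -/
def stepR {ι : Type*} [Fintype ι] [DecidableEq ι] (R : Set (ι → Bool))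
    (a b : ι → Bool) : Prop :=
  a ∈ R ∧ b ∈ R ∧ hammingDist a b = 1

/-- `a` and `b` are connected in the solution graph of `R`. -/
def connIn {ι : Type*} [Fintype ι] [DecidableEq ι] (R : Set (ι → Bool)) :
    (ι → Bool) → (ι → Bool) → Prop :=
  Relation.ReflTransGen (stepR R)

/-- There is a path of length `k` from `a` to `b` in the solution graph of `R`. -/
def hasPathLen {ι : Type*} [Fintype ι] [DecidableEq ι] (R : Set (ι → Bool)) :
    ℕ → (ι → Bool) → (ι → Bool) → Prop
  | 0, a, b => a = b
  | k + 1, a, b => ∃ c, stepR R a c ∧ hasPathLen R k c b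

/-- Shortest-path distance in the solution graph of `R`. -/
noncomputable def distIn {ι : Type*} [Fintype ι] [DecidableEq ι] (R : Set (ι → Bool))
    (a b : ι → Bool) : ℕ :=
  sInf {k | hasPathLen R k a b}

/-! To join `a` to `b`, first set coordinate `i` to the separating value `v` in `a`, then walk to
`b` with coordinate `i` set to `v`, flipping only disagreeing coordinates, and finally restore
`b i`. The middle part stays in the subcube `x i = v`, which consists of solutions, and overwriting
the same coordinate in both vectors does not increase their Hamming distance, so at most two flips
are added. -/

section HammingDist

open Function (update update_self)

variable {ι : Type*} [Fintype ι] [DecidableEq ι] {β : ι → Type*} [∀ j, DecidableEq (β j)]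

theorem hammingDist_update_left_add_one {x y : ∀ j, β j} {i : ι} (h : x i ≠ y i) :
    hammingDist (update x i (y i)) y + 1 = hammingDist x y := by
  have herase : ({j | update x i (y i) j ≠ y j} : Finset ι) =
      ({j | x j ≠ y j} : Finset ι).erase i := by
    ext j
    by_cases hj : j = i
    · subst hj; simp
    · simp [hj]
  unfold hammingDist
  rw [herase, Finset.card_erase_add_one (by simpa using h)]

theorem hammingDist_update_eq_one {x : ∀ j, β j} {i : ι} {v : β i} (h : x i ≠ v) :
    hammingDist x (update x i v) = 1 := by
  have hne : x i ≠ update x i v i := by rwa [update_self]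
  simpa using (hammingDist_update_left_add_one hne).symm

theorem hammingDist_update_le_one (x : ∀ j, β j) (i : ι) (v : β i) :
    hammingDist x (update x i v) ≤ 1 := by
  by_cases h : x i = v
  · simp [← h]
  · exact (hammingDist_update_eq_one h).le

theorem hammingDist_update_update_le (x y : ∀ j, β j) (i : ι) (v : β i) :
    hammingDist (update x i v) (update y i v) ≤ hammingDist x y :=
  hammingDist_comp_le_hammingDist fun j (w : β j) => (if h : j = i then h ▸ v else w : β j)

end HammingDist

section SolutionGraph

open Function (update update_self)

variable {ι : Type*} [Fintype ι] [DecidableEq ι] {R : Set (ι → Bool)} {a b c : ι → Bool} {k l : ℕ}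

theorem stepR.symm (h : stepR R a b) : stepR R b a :=
  ⟨h.2.1, h.1, hammingDist_comm a b ▸ h.2.2⟩

theorem stepR_update {i : ι} {v : Bool} (ha : a ∈ R) (hu : update a i v ∈ R)
    (hv : a i ≠ v) : stepR R a (update a i v) :=
  ⟨ha, hu, hammingDist_update_eq_one hv⟩

theorem hasPathLen.trans (hab : hasPathLen R k a b) (hbc : hasPathLen R l b c) :
    hasPathLen R (k + l) a c := by
  induction k generalizing a with
  | zero =>
    obtain rfl : a = b := hab
    rwa [Nat.zero_add]
  | succ k ih =>
    obtain ⟨d, had, hdb⟩ := hab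
    rw [Nat.succ_add]
    exact ⟨d, had, ih hdb⟩

theorem hasPathLen.symm (hab : hasPathLen R k a b) : hasPathLen R k b a := by
  induction k generalizing a with
  | zero => exact Eq.symm hab
  | succ k ih =>
    obtain ⟨d, had, hdb⟩ := hab
    have hda : hasPathLen R 1 d a := ⟨a, had.symm, rfl⟩
    exact (ih hdb).trans hda

theorem hasPathLen.connIn (hab : hasPathLen R k a b) : connIn R a b := by
  induction k generalizing a with
  | zero =>
    obtain rfl : a = b := hab
    exact .refl
  | succ k ih =>
    obtain ⟨d, had, hdb⟩ := hab
    exact .head had (ih hdb)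

theorem hasPathLen.distIn_le (hab : hasPathLen R k a b) : distIn R a b ≤ k :=
  Nat.sInf_le hab

theorem hasPathLen_hammingDist_of_between_mem
    (hR : ∀ z : ι → Bool, (∀ j, z j = a j ∨ z j = b j) → z ∈ R) :
    hasPathLen R (hammingDist a b) a b := by
  induction hk : hammingDist a b generalizing a with
  | zero => exact hammingDist_eq_zero.mp hk
  | succ k ih =>
    obtain ⟨j, hj⟩ : ∃ j, a j ≠ b j :=
      Function.ne_iff.mp (hammingDist_pos.mp (by omega))
    have hbetween : ∀ m, update a j (b j) m = a m ∨ update a j (b j) m = b m := by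
      intro m
      by_cases hm : m = j
      · subst hm; simp
      · simp [hm]
    have hstep : stepR R a (update a j (b j)) :=
      stepR_update (hR a fun _ => .inl rfl) (hR _ hbetween) hj
    have hdist := hammingDist_update_left_add_one hj
    refine ⟨_, hstep, ih (fun z hz => hR z fun m => ?_) (by omega)⟩
    rcases hz m with h | h
    · exact h ▸ hbetween m
    · exact .inr h

theorem hasPathLen_hammingDist_update {i : ι} {v : Bool} (ha : a ∈ R) (hu : update a i v ∈ R) :
    hasPathLen R (hammingDist a (update a i v)) a (update a i v) := by
  by_cases h : a i = v
  · simp [← h, hasPathLen]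
  · rw [hammingDist_update_eq_one h]
    exact ⟨_, stepR_update ha hu h, rfl⟩

theorem hasPathLen_hammingDist_of_apply_eq {i : ι} {v : Bool}
    (hsep : ∀ z : ι → Bool, z i = v → z ∈ R) (ha : a i = v) (hb : b i = v) :
    hasPathLen R (hammingDist a b) a b :=
  hasPathLen_hammingDist_of_between_mem fun z hz => hsep z ((hz i).elim (·.trans ha) (·.trans hb))

theorem stmt11_general {i : ι} {v : Bool} (hsep : ∀ z : ι → Bool, z i = v → z ∈ R)
    (ha : a ∈ R) (hb : b ∈ R) :
    connIn R a b ∧ distIn R a b ≤ hammingDist a b + 2 := by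
  have hua : update a i v ∈ R := hsep _ (update_self ..)
  have hub : update b i v ∈ R := hsep _ (update_self ..)
  have hmid := hasPathLen_hammingDist_of_apply_eq hsep
    (update_self i v a) (update_self i v b)
  have hpath := ((hasPathLen_hammingDist_update ha hua).trans hmid).trans
    (hasPathLen_hammingDist_update hb hub).symm
  refine ⟨hpath.connIn, hpath.distIn_le.trans ?_⟩
  have hla := hammingDist_update_le_one a i v
  have hlb := hammingDist_update_le_one b i v
  have hlmid := hammingDist_update_update_le a b i v
  omega

end SolutionGraph

/-- For a 0-separating Boolean function `f` (some coordinate `i` is `0` on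
every non-solution, i.e. every vector with `i`-th coordinate `1` is a
solution), any two solutions are connected in the solution graph and their
distance is at most the Hamming distance plus 2. -/
theorem stmt11 {n : ℕ} (f : (Fin n → Bool) → Bool)
    (hsep : ∃ i, ∀ a : Fin n → Bool, a i = true → f a = true)
    (a b : Fin n → Bool) (ha : f a = true) (hb : f b = true) :
    connIn {x | f x = true} a b ∧
      distIn {x | f x = true} a b ≤ hammingDist a b + 2 :=
  hsep.elim fun _ hi => stmt11_general hi ha hb
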